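/- arXiv:2408.16488 — 7 statements merged into one kernel-verified Lean document; each statement's English description precedes it below -/
import Mathlib

section
/- For every smooth cubic form f ∈ MvPolynomial (Fin 3) ℂ there exist g ∈ SL₃(ℂ) and a pair (α,β) ∈ ℂ² with (α,β) ≠ (0,0) such that f∘g = α·(x₀³+x₁³+x₂³) + β·x₀x₁x₂. (Every elliptic curve in ℙ²(ℂ) is projectively equivalent to a member of the Hesse pencil.) -/
open MvPolynomial

/-- The linear substitution `f ∘ g`, i.e. `x_i ↦ Σ_j g_{ij} x_j`, so that
`(f∘g)(v) = f(g·v)`. -/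
noncomputable def substSL (g : Matrix.SpecialLinearGroup (Fin 3) ℂ)
    (f : MvPolynomial (Fin 3) ℂ) : MvPolynomial (Fin 3) ℂ :=
  aeval (fun i : Fin 3 => ∑ j : Fin 3, C (g.1 i j) * X j) f

/-- A cubic form is smooth iff at every nonzero zero of `f` the gradient of `f` does not
vanish; equivalently, the plane cubic `C(f) ⊂ ℙ²(ℂ)` is an elliptic curve. -/
def IsSmoothCubic (f : MvPolynomial (Fin 3) ℂ) : Prop :=
  ∀ v : Fin 3 → ℂ, v ≠ 0 → eval v f = 0 → ∃ i : Fin 3, eval v (pderiv i f) ≠ 0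

noncomputable section HesseAux

def actM (M : Matrix (Fin 3) (Fin 3) ℂ) (F : ℂ → ℂ → ℂ → ℂ) (x y z : ℂ) : ℂ :=
  F (M 0 0 * x + M 0 1 * y + M 0 2 * z) (M 1 0 * x + M 1 1 * y + M 1 2 * z)
    (M 2 0 * x + M 2 1 * y + M 2 2 * z)

def HesF (F : ℂ → ℂ → ℂ → ℂ) : Prop :=
  ∃ M : Matrix (Fin 3) (Fin 3) ℂ, M.det ≠ 0 ∧ ∃ α β : ℂ, α ≠ 0 ∧
    ∀ x y z, actM M F x y z = α * (x ^ 3 + y ^ 3 + z ^ 3) + β * (x * y * z)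

def SingF (F : ℂ → ℂ → ℂ → ℂ) : Prop :=
  ∃ a b c : ℂ, ¬ (a = 0 ∧ b = 0 ∧ c = 0) ∧ ∀ x y z, ∃ k l, ∀ t : ℂ,
    F (a + t * x) (b + t * y) (c + t * z) = t ^ 2 * k + t ^ 3 * l

lemma HesF.of_act {M : Matrix (Fin 3) (Fin 3) ℂ} {F : ℂ → ℂ → ℂ → ℂ} (hM : M.det ≠ 0)
    (h : HesF (actM M F)) : HesF F := by
  obtain ⟨N, hN, α, β, hα, h⟩ := h
  refine ⟨M * N, by rw [Matrix.det_mul]; exact mul_ne_zero hM hN, α, β, hα, fun x y z => ?_⟩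
  rw [← h x y z]
  simp only [actM, Matrix.mul_apply, Fin.sum_univ_three]
  congr 1 <;> ring

lemma SingF.of_act {M : Matrix (Fin 3) (Fin 3) ℂ} {F : ℂ → ℂ → ℂ → ℂ} (hM : M.det ≠ 0)
    (h : SingF (actM M F)) : SingF F := by
  obtain ⟨a, b, c, h0, h⟩ := h
  refine ⟨M 0 0 * a + M 0 1 * b + M 0 2 * c, M 1 0 * a + M 1 1 * b + M 1 2 * c,
    M 2 0 * a + M 2 1 * b + M 2 2 * c, ?_, ?_⟩
  · rintro ⟨h1, h2, h3⟩
    apply h0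
    have : M.mulVec ![a, b, c] = 0 := by
      ext i
      fin_cases i <;> simp [Matrix.mulVec, dotProduct, Fin.sum_univ_three, h1, h2, h3]
    have := Matrix.eq_zero_of_mulVec_eq_zero hM this
    exact ⟨congrFun this 0, congrFun this 1, congrFun this 2⟩
  · intro x y z
    set w := M⁻¹.mulVec ![x, y, z] with hw
    have hMw : M.mulVec w = ![x, y, z] := by
      rw [hw, Matrix.mulVec_mulVec, Matrix.mul_nonsing_inv _ (isUnit_iff_ne_zero.mpr hM),
        Matrix.one_mulVec]
    have e0 := congrFun hMw 0
    have e1 := congrFun hMw 1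
    have e2 := congrFun hMw 2
    simp [Matrix.mulVec, dotProduct, Fin.sum_univ_three] at e0 e1 e2
    obtain ⟨k, l, hk⟩ := h (w 0) (w 1) (w 2)
    refine ⟨k, l, fun t => ?_⟩
    rw [← hk t, ← e0, ← e1, ← e2]
    simp only [actM]
    congr 1 <;> ring

lemma exists_sqrt' (a : ℂ) : ∃ r : ℂ, r ^ 2 = a := IsAlgClosed.exists_pow_nat_eq a (by norm_num)
lemma exists_cbrt' (a : ℂ) : ∃ r : ℂ, r ^ 3 = a := IsAlgClosed.exists_pow_nat_eq a (by norm_num)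

/-- Last step. -/
lemma hes_last (F : ℂ → ℂ → ℂ → ℂ) (a1 a3 : ℂ) (h3 : a3 ≠ 0)
    (hF : ∀ x y z, F x y z = z * y * (y + a1 * x + a3 * z) - x ^ 3) (hs : ¬ SingF F) : HesF F := by
  obtain ⟨ω, hω⟩ : ∃ ω : ℂ, ω ^ 2 + ω + 1 = 0 := by
    obtain ⟨r, hr⟩ := exists_sqrt' (-3)
    exact ⟨(-1 + r) / 2, by linear_combination hr / 4⟩
  have hω1 : ω ^ 2 - ω ≠ 0 := by
    intro h
    have h1 : ω ^ 2 = -1/2 := by linear_combination (hω + h) / 2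
    have h2 : ω = -1/2 := by linear_combination (hω - h) / 2
    rw [h2] at h1; norm_num at h1
  -- first change of coordinates
  set M : Matrix (Fin 3) (Fin 3) ℂ :=
    !![1, 0, 0; -a1/3, 1, 1; -a1/3/a3, ω/a3, ω^2/a3] with hM
  have hdet : M.det ≠ 0 := by
    have : M.det = (ω ^ 2 - ω) / a3 := by
      rw [hM, Matrix.det_fin_three]; simp; ring
    rw [this]; exact div_ne_zero hω1 h3
  have key : ∀ x y z, actM M F x y z =
      (a1 ^ 3 / (27 * a3) - 1) * x ^ 3 - (1 / a3) * (y ^ 3 + z ^ 3) - a1 / a3 * (x * y * z) := by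
    intro x y z
    have hω2 : ω ^ 2 = -1 - ω := by linear_combination hω
    simp only [actM, hF, hM]
    simp
    rw [hω2]
    field_simp
    ring_nf
    simp only [hω2]
    ring
  apply HesF.of_act hdet
  have hs' : ¬ SingF (actM M F) := fun h => hs (h.of_act hdet)
  set κ := a1 ^ 3 / (27 * a3) - 1 with hκ
  have hκ0 : κ ≠ 0 := by
    intro h0
    apply hs'
    refine ⟨1, 0, 0, by simp, fun x y z => ⟨- a1/a3 * y * z, -(1 / a3) * (y ^ 3 + z ^ 3) - a1 / a3 * (x * y * z), fun t => ?_⟩⟩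
    rw [key, h0]; ring
  obtain ⟨ρ, hρ⟩ := exists_cbrt' (-(1 / a3) / κ)
  have hρ0 : ρ ≠ 0 := by
    rintro rfl
    have : -(1 / a3) / κ ≠ 0 := div_ne_zero (neg_ne_zero.mpr (one_div_ne_zero h3)) hκ0
    apply this; rw [← hρ]; norm_num
  refine ⟨!![ρ, 0, 0; 0, 1, 0; 0, 0, 1], by simp [Matrix.det_fin_three, hρ0], -(1 / a3), - a1 / a3 * ρ,
    neg_ne_zero.mpr (one_div_ne_zero h3), fun x y z => ?_⟩
  have hρ' : κ * ρ ^ 3 = -(1 / a3) := by rw [hρ]; field_simp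
  have : ∀ x y z, actM !![ρ, 0, 0; 0, 1, 0; 0, 0, 1] (actM M F) x y z = actM M F (ρ * x) y z := by
    intro x y z; simp [actM]
  rw [this, key]
  linear_combination x ^ 3 * hρ'

lemma hes_weier (F : ℂ → ℂ → ℂ → ℂ) (e A B : ℂ)
    (hF : ∀ x y z, F x y z = y ^ 2 * z - (x ^ 3 + e * x ^ 2 * z + A * x * z ^ 2 + B * z ^ 3))
    (hs : ¬ SingF F) : HesF F := by
  obtain ⟨x0, hx0⟩ : ∃ x : ℂ, 3 * x ^ 4 + 4 * e * x ^ 3 + 6 * A * x ^ 2 + 12 * B * x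
      + (4 * e * B - A ^ 2) = 0 := by
    have hd : (Polynomial.C 3 * Polynomial.X ^ 4 + (Polynomial.C (4 * e) * Polynomial.X ^ 3 + Polynomial.C (6 * A) * Polynomial.X ^ 2 + Polynomial.C (12 * B) * Polynomial.X
      + Polynomial.C (4 * e * B - A ^ 2)) : Polynomial ℂ).degree = 4 := by
      compute_degree!
    obtain ⟨x, hx⟩ := IsAlgClosed.exists_root _ (by rw [hd]; norm_num)
    refine ⟨x, ?_⟩
    simp [Polynomial.IsRoot] at hx
    linear_combination hx
  obtain ⟨y0, hy0⟩ := exists_sqrt' (x0 ^ 3 + e * x0 ^ 2 + A * x0 + B)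
  have hne : y0 ≠ 0 := by
    rintro rfl
    apply hs
    have hP : x0 ^ 3 + e * x0 ^ 2 + A * x0 + B = 0 := by rw [← hy0]; norm_num
    have hP' : 3 * x0 ^ 2 + 2 * e * x0 + A = 0 := by
      rw [← sq_eq_zero_iff]
      linear_combination (12 * x0 + 4 * e) * hP - hx0
    refine ⟨x0, 0, 1, by simp, fun x y z => ⟨y ^ 2 - (x - x0 * z) ^ 2 * (3 * x0 + e),
      y ^ 2 * z - z * (x - x0 * z) ^ 2 * (3 * x0 + e) - (x - x0 * z) ^ 3, fun t => ?_⟩⟩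
    rw [hF]
    linear_combination (-(1 + t * z)^3) * hP - t * (x - x0 * z) * (1 + t * z) ^ 2 * hP'
  set m := (3 * x0 ^ 2 + 2 * e * x0 + A) / (2 * y0) with hm
  have hm1 : 2 * m * y0 = 3 * x0 ^ 2 + 2 * e * x0 + A := by rw [hm]; field_simp
  have hm2 : m ^ 2 = 3 * x0 + e := by
    have h4 : 4 * y0 ^ 2 ≠ 0 := by simpa using hne
    apply mul_left_cancel₀ h4
    linear_combination (2 * m * y0 + 3 * x0 ^ 2 + 2 * e * x0 + A) * hm1 -
      (12 * x0 + 4 * e) * hy0 - hx0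
  have hdet : (!![1, 0, x0; m, 1, y0; 0, 0, 1] : Matrix (Fin 3) (Fin 3) ℂ).det ≠ 0 := by
    simp [Matrix.det_fin_three]
  apply HesF.of_act hdet
  apply hes_last _ (2 * m) (2 * y0) (by simpa using hne) _ (fun h => hs (h.of_act hdet))
  intro x y z
  simp [actM, hF]
  linear_combination x ^ 2 * z * hm2 + x * z ^ 2 * hm1 + z ^ 3 * hy0

lemma hes_flex (F : ℂ → ℂ → ℂ → ℂ) (c d e k1 k2 k3 : ℂ) (hd : d ≠ 0)
    (hF : ∀ x y z, F x y z = c * x ^ 3 + d * y ^ 2 * z + e * y * z ^ 2 + k1 * x ^ 2 * z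
      + k2 * x * z ^ 2 + k3 * z ^ 3)
    (hs : ¬ SingF F) : HesF F := by
  have hc : c ≠ 0 := by
    rintro rfl
    apply hs
    obtain ⟨r, hr⟩ := exists_sqrt' (-k1 / d)
    have hr' : d * r ^ 2 + k1 = 0 := by rw [hr]; field_simp; ring
    refine ⟨1, r, 0, by simp, fun x y z => ⟨d * 2 * r * y * z + e * r * z ^ 2 + 2 * k1 * x * z
      + k2 * z ^ 2, d * y ^ 2 * z + e * y * z ^ 2 + k1 * x ^ 2 * z + k2 * x * z ^ 2 + k3 * z ^ 3,
      fun t => ?_⟩⟩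
    rw [hF]
    linear_combination t * z * hr'
  obtain ⟨ρ, hρ⟩ := exists_cbrt' (-1 / c)
  have hρ0 : ρ ≠ 0 := by
    rintro rfl
    have : -1 / c ≠ 0 := div_ne_zero (by norm_num) hc
    apply this; rw [← hρ]; norm_num
  have hρ' : c * ρ ^ 3 = -1 := by rw [hρ]; field_simp
  have hdet : (!![ρ, 0, 0; 0, 1, -e / (2 * d) / d; 0, 0, 1 / d] : Matrix (Fin 3) (Fin 3) ℂ).det ≠ 0 := by
    simp [Matrix.det_fin_three, hρ0, hd]
  apply HesF.of_act hdet
  apply hes_weier _ (-(k1 * ρ ^ 2 / d)) (-(k2 * ρ / d ^ 2)) (-(k3 / d ^ 3 - e ^ 2 / (4 * d ^ 4)))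
    _ (fun h => hs (h.of_act hdet))
  intro x y z
  simp [actM, hF]
  field_simp
  linear_combination (16 * d ^ 4 * x ^ 3) * hρ'

lemma exists_binary_zero (R : ℂ → ℂ → ℂ) (P : Polynomial ℂ) (hP : ∀ x, P.eval x = R x 1)
    (hc : Continuous fun y => R 1 y) (hh : ∀ t x y, R (t * x) (t * y) = t ^ 9 * R x y) :
    ∃ x y, ¬ (x = 0 ∧ y = 0) ∧ R x y = 0 := by
  by_cases hd : P.degree = 0
  · refine ⟨1, 0, by simp, ?_⟩
    obtain hC := Polynomial.eq_C_of_degree_eq_zero hd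
    set c := P.coeff 0
    have h1 : ∀ x, R x 1 = c := fun x => by rw [← hP, hC]; simp
    have h2 : (fun y => R 1 y) = fun y => y ^ 9 * c := by
      apply Continuous.ext_on (dense_compl_singleton (0 : ℂ)) hc (by fun_prop)
      intro y hy
      have hy : y ≠ 0 := hy
      have := hh y (1 / y) 1
      rw [h1] at this
      simpa [hy] using this
    have := congrFun h2 0
    simpa using this
  · obtain ⟨x, hx⟩ := IsAlgClosed.exists_root P hd
    exact ⟨x, 1, by simp, by rw [← hP]; exact hx⟩

lemma exists_three_roots (a b : ℂ) : ∃ z1 z2 z3 : ℂ, z1 + z2 + z3 = 0 ∧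
    z1 * z2 + z1 * z3 + z2 * z3 = a ∧ z1 * z2 * z3 = -b := by
  obtain ⟨z1, h1⟩ : ∃ z : ℂ, z ^ 3 + a * z + b = 0 := by
    have hd : (Polynomial.X ^ 3 + Polynomial.C a * Polynomial.X + Polynomial.C b : Polynomial ℂ).degree = 3 := by
      compute_degree!
    obtain ⟨x, hx⟩ := IsAlgClosed.exists_root _ (by rw [hd]; norm_num)
    exact ⟨x, by simpa [Polynomial.IsRoot] using hx⟩
  obtain ⟨r, hr⟩ := exists_sqrt' (z1 ^ 2 - 4 * (a + z1 ^ 2))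
  refine ⟨z1, (-z1 + r) / 2, (-z1 - r) / 2, by ring, ?_, ?_⟩
  · linear_combination (-1/4) * hr
  · linear_combination (-z1/4) * hr + h1

def NN {K : Type} [CommRing K] (a b p q r : K) : K :=
  r^3 - 2*a*r^2*p + a*r*q^2 - b*q^3 + 3*b*p*q*r + a^2*r*p^2 - a*b*p^2*q + b^2*p^3

lemma exists_common (a b p q r : ℂ) (h : NN a b p q r = 0) :
    ∃ z, z ^ 3 + a * z + b = 0 ∧ p * z ^ 2 + q * z + r = 0 := by
  obtain ⟨z1, z2, z3, h1, h2, h3⟩ := exists_three_roots a b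
  have e3 : z3 = -z1 - z2 := by linear_combination h1
  have eb : b = -(z1 * z2 * z3) := by rw [h3]; ring
  have hprod : (p * z1 ^ 2 + q * z1 + r) * (p * z2 ^ 2 + q * z2 + r) * (p * z3 ^ 2 + q * z3 + r)
      = 0 := by
    rw [← h, NN, eb, ← h2, e3]; ring
  rcases mul_eq_zero.mp hprod with h' | h'
  · rcases mul_eq_zero.mp h' with h' | h'
    · exact ⟨z1, by rw [eb, ← h2, e3]; ring, h'⟩
    · exact ⟨z2, by rw [eb, ← h2, e3]; ring, h'⟩
  · exact ⟨z3, by rw [eb, ← h2, e3]; ring, h'⟩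

def qa {K : Type} [CommRing K] (a0 a1 a2 x y : K) : K := a0 * x ^ 2 + a1 * x * y + a2 * y ^ 2
def qb {K : Type} [CommRing K] (b0 b1 b2 b3 x y : K) : K :=
  b0 * x ^ 3 + b1 * x ^ 2 * y + b2 * x * y ^ 2 + b3 * y ^ 3
def qp {K : Type} [CommRing K] (a0 a1 a2 b0 b1 b2 b3 x y : K) : K :=
  6 * (2 * a0 * (2 * b2 * x + 6 * b3 * y) + 2 * a2 * (6 * b0 * x + 2 * b1 * y)
    - 2 * a1 * (2 * b1 * x + 2 * b2 * y))
def qq {K : Type} [CommRing K] (a0 a1 a2 b0 b1 b2 b3 x y : K) : K :=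
  6 * ((6 * b0 * x + 2 * b1 * y) * (2 * b2 * x + 6 * b3 * y) - (2 * b1 * x + 2 * b2 * y) ^ 2)
    + (-2 * a0 * (a1 * x + 2 * a2 * y) ^ 2
      + 2 * a1 * (2 * a0 * x + a1 * y) * (a1 * x + 2 * a2 * y)
      - 2 * a2 * (2 * a0 * x + a1 * y) ^ 2) - 6 * (4 * a0 * a2 - a1 ^ 2) * qa a0 a1 a2 x y
def qr {K : Type} [CommRing K] (a0 a1 a2 b0 b1 b2 b3 x y : K) : K :=
  -(6 * b0 * x + 2 * b1 * y) * (a1 * x + 2 * a2 * y) ^ 2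
    + 2 * (2 * b1 * x + 2 * b2 * y) * (2 * a0 * x + a1 * y) * (a1 * x + 2 * a2 * y)
    - (2 * b2 * x + 6 * b3 * y) * (2 * a0 * x + a1 * y) ^ 2
    - 6 * (4 * a0 * a2 - a1 ^ 2) * qb b0 b1 b2 b3 x y
def RR {K : Type} [CommRing K] (a0 a1 a2 b0 b1 b2 b3 x y : K) : K :=
  NN (qa a0 a1 a2 x y) (qb b0 b1 b2 b3 x y) (qp a0 a1 a2 b0 b1 b2 b3 x y)
    (qq a0 a1 a2 b0 b1 b2 b3 x y) (qr a0 a1 a2 b0 b1 b2 b3 x y)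

lemma RR_hom (a0 a1 a2 b0 b1 b2 b3 t x y : ℂ) : RR a0 a1 a2 b0 b1 b2 b3 (t * x) (t * y)
    = t ^ 9 * RR a0 a1 a2 b0 b1 b2 b3 x y := by
  have h1 : qa a0 a1 a2 (t * x) (t * y) = t ^ 2 * qa a0 a1 a2 x y := by unfold qa; ring
  have h2 : qb b0 b1 b2 b3 (t * x) (t * y) = t ^ 3 * qb b0 b1 b2 b3 x y := by unfold qb; ring
  have h3 : qp a0 a1 a2 b0 b1 b2 b3 (t * x) (t * y) = t * qp a0 a1 a2 b0 b1 b2 b3 x y := by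
    unfold qp; ring
  have h4 : qq a0 a1 a2 b0 b1 b2 b3 (t * x) (t * y) = t ^ 2 * qq a0 a1 a2 b0 b1 b2 b3 x y := by
    unfold qq; rw [h1]; ring
  have h5 : qr a0 a1 a2 b0 b1 b2 b3 (t * x) (t * y) = t ^ 3 * qr a0 a1 a2 b0 b1 b2 b3 x y := by
    unfold qr; rw [h2]; ring
  unfold RR
  rw [h1, h2, h3, h4, h5]
  unfold NN
  ring

lemma hes_monic (F : ℂ → ℂ → ℂ → ℂ) (a0 a1 a2 b0 b1 b2 b3 : ℂ)
    (hF : ∀ x y z, F x y z = z ^ 3 + z * (a0 * x ^ 2 + a1 * x * y + a2 * y ^ 2)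
      + (b0 * x ^ 3 + b1 * x ^ 2 * y + b2 * x * y ^ 2 + b3 * y ^ 3))
    (hs : ¬ SingF F) : HesF F := by
  obtain ⟨x, y, hxy, hR⟩ := exists_binary_zero (RR a0 a1 a2 b0 b1 b2 b3)
    (RR (.C a0) (.C a1) (.C a2) (.C b0) (.C b1) (.C b2) (.C b3) .X 1)
    (by intro x; simp [RR, NN, qa, qb, qp, qq, qr])
    (by unfold RR NN qa qb qp qq qr qa qb; fun_prop)
    (fun t x y => RR_hom a0 a1 a2 b0 b1 b2 b3 t x y)
  obtain ⟨z, hz, hz'⟩ := exists_common _ _ _ _ _ hR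
  set H : Matrix (Fin 3) (Fin 3) ℂ :=
    !![2 * a0 * z + (6 * b0 * x + 2 * b1 * y), a1 * z + (2 * b1 * x + 2 * b2 * y), 2 * a0 * x + a1 * y;
      a1 * z + (2 * b1 * x + 2 * b2 * y), 2 * a2 * z + (2 * b2 * x + 6 * b3 * y), a1 * x + 2 * a2 * y;
      2 * a0 * x + a1 * y, a1 * x + 2 * a2 * y, 6 * z] with hH
  have hdet : H.det = 0 := by
    rw [hH, Matrix.det_fin_three]
    simp
    unfold qp qq qr at hz'
    linear_combination hz' + 6 * (4 * a0 * a2 - a1 ^ 2) * hz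
  obtain ⟨w, hw0, hw⟩ := Matrix.exists_mulVec_eq_zero_iff.mpr hdet
  have w0 := congrFun hw 0
  have w1 := congrFun hw 1
  have w2 := congrFun hw 2
  simp [Matrix.mulVec, dotProduct, Fin.sum_univ_three, hH] at w0 w1 w2
  have hFq : z ^ 3 + z * (a0 * x ^ 2 + a1 * x * y + a2 * y ^ 2)
      + (b0 * x ^ 3 + b1 * x ^ 2 * y + b2 * x * y ^ 2 + b3 * y ^ 3) = 0 := by
    unfold qa qb at hz; linear_combination hz
  -- gradient
  obtain ⟨g0, hg0⟩ : ∃ g, g = z * (2 * a0 * x + a1 * y) + (3 * b0 * x ^ 2 + 2 * b1 * x * y + b2 * y ^ 2) :=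
    ⟨_, rfl⟩
  obtain ⟨g1, hg1⟩ : ∃ g, g = z * (a1 * x + 2 * a2 * y) + (b1 * x ^ 2 + 2 * b2 * x * y + 3 * b3 * y ^ 2) :=
    ⟨_, rfl⟩
  obtain ⟨g2, hg2⟩ : ∃ g, g = 3 * z ^ 2 + (a0 * x ^ 2 + a1 * x * y + a2 * y ^ 2) := ⟨_, rfl⟩
  have hg : ¬ (g0 = 0 ∧ g1 = 0 ∧ g2 = 0) := by
    rintro ⟨h0, h1, h2⟩
    apply hs
    refine ⟨x, y, z, fun h => hxy ⟨h.1, h.2.1⟩, fun u v w => ⟨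
      3 * z * w ^ 2 + w * (2 * a0 * x * u + a1 * (x * v + u * y) + 2 * a2 * y * v)
        + z * (a0 * u ^ 2 + a1 * u * v + a2 * v ^ 2)
        + (3 * b0 * x * u ^ 2 + b1 * (2 * x * u * v + u ^ 2 * y) + b2 * (2 * y * u * v + x * v ^ 2)
          + 3 * b3 * y * v ^ 2), F u v w, fun t => ?_⟩⟩
    rw [hF, hF]
    rw [hg0] at h0
    rw [hg1] at h1
    rw [hg2] at h2
    linear_combination hFq + t * u * h0 + t * v * h1 + t * w * h2
  obtain ⟨u0, u1, u2, hu⟩ : ∃ u0 u1 u2, g0 * u0 + g1 * u1 + g2 * u2 ≠ 0 := by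
    by_contra! hcon
    apply hg
    have h0 := hcon 1 0 0
    have h1 := hcon 0 1 0
    have h2 := hcon 0 0 1
    simp at h0 h1 h2
    exact ⟨h0, h1, h2⟩
  set M : Matrix (Fin 3) (Fin 3) ℂ := !![w 0, x, u0; w 1, y, u1; w 2, z, u2] with hM
  have hgw : g0 * w 0 + g1 * w 1 + g2 * w 2 = 0 := by
    rw [hg0, hg1, hg2]
    linear_combination (x * w0 + y * w1 + z * w2) / 2
  have hgq : g0 * x + g1 * y + g2 * z = 0 := by
    rw [hg0, hg1, hg2]
    linear_combination 3 * hFq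
  have hMdet : M.det ≠ 0 := by
    intro h
    obtain ⟨c, hc0, hc⟩ := Matrix.exists_mulVec_eq_zero_iff.mpr h
    have c0 := congrFun hc 0
    have c1 := congrFun hc 1
    have c2 := congrFun hc 2
    simp [Matrix.mulVec, dotProduct, Fin.sum_univ_three, hM] at c0 c1 c2
    have k2 : c 2 = 0 := by
      have : (g0 * u0 + g1 * u1 + g2 * u2) * c 2 = 0 := by
        linear_combination g0 * c0 + g1 * c1 + g2 * c2 - c 0 * hgw - c 1 * hgq
      exact (mul_eq_zero.mp this).resolve_left hu
    rw [k2] at c0 c1 c2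
    have k1 : c 1 = 0 := by
      by_contra hne
      apply hg
      refine ⟨?_, ?_, ?_⟩ <;> apply (mul_eq_zero.mp (?_ : c 1 * _ = 0)).resolve_left hne
      · rw [hg0]
        linear_combination ((2 * a0 * z + (6 * b0 * x + 2 * b1 * y)) * c0
          + (a1 * z + (2 * b1 * x + 2 * b2 * y)) * c1 + (2 * a0 * x + a1 * y) * c2 - c 0 * w0) / 2
      · rw [hg1]
        linear_combination ((a1 * z + (2 * b1 * x + 2 * b2 * y)) * c0
          + (2 * a2 * z + (2 * b2 * x + 6 * b3 * y)) * c1 + (a1 * x + 2 * a2 * y) * c2 - c 0 * w1) / 2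
      · rw [hg2]
        linear_combination ((2 * a0 * x + a1 * y) * c0
          + (a1 * x + 2 * a2 * y) * c1 + (6 * z) * c2 - c 0 * w2) / 2
    rw [k1] at c0 c1 c2
    simp at c0 c1 c2
    have k0 : c 0 = 0 := by
      by_contra hne
      apply hw0
      ext i
      fin_cases i
      · exact c0.resolve_right hne
      · exact c1.resolve_right hne
      · exact c2.resolve_right hne
    apply hc0
    ext i
    fin_cases i
    · exact k0
    · exact k1
    · exact k2
  apply HesF.of_act hMdet
  apply hes_flex _ (F (w 0) (w 1) (w 2)) (g0 * u0 + g1 * u1 + g2 * u2)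
    (3 * z * u2 ^ 2 + u2 * (2 * a0 * x * u0 + a1 * (x * u1 + u0 * y) + 2 * a2 * y * u1)
        + z * (a0 * u0 ^ 2 + a1 * u0 * u1 + a2 * u1 ^ 2)
        + (3 * b0 * x * u0 ^ 2 + b1 * (2 * x * u0 * u1 + u0 ^ 2 * y)
          + b2 * (2 * y * u0 * u1 + x * u1 ^ 2) + 3 * b3 * y * u1 ^ 2))
    (3 * u2 * w 2 ^ 2 + w 2 * (2 * a0 * u0 * w 0 + a1 * (u0 * w 1 + w 0 * u1) + 2 * a2 * u1 * w 1)
        + u2 * (a0 * w 0 ^ 2 + a1 * w 0 * w 1 + a2 * w 1 ^ 2)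
        + (3 * b0 * u0 * w 0 ^ 2 + b1 * (2 * u0 * w 0 * w 1 + w 0 ^ 2 * u1)
          + b2 * (2 * u1 * w 0 * w 1 + u0 * w 1 ^ 2) + 3 * b3 * u1 * w 1 ^ 2))
    (3 * w 2 * u2 ^ 2 + u2 * (2 * a0 * w 0 * u0 + a1 * (w 0 * u1 + u0 * w 1) + 2 * a2 * w 1 * u1)
        + w 2 * (a0 * u0 ^ 2 + a1 * u0 * u1 + a2 * u1 ^ 2)
        + (3 * b0 * w 0 * u0 ^ 2 + b1 * (2 * w 0 * u0 * u1 + u0 ^ 2 * w 1)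
          + b2 * (2 * w 1 * u0 * u1 + w 0 * u1 ^ 2) + 3 * b3 * w 1 * u1 ^ 2))
    (F u0 u1 u2) hu _ (fun h => hs (h.of_act hMdet))
  intro X Y Z
  rw [hg0, hg1, hg2]
  simp [actM, hF, hM]
  linear_combination Y ^ 3 * hFq + (X * Y ^ 2 * x / 2 + X ^ 2 * Y * w 0 / 2 + X * Y * Z * u0) * w0
    + (X * Y ^ 2 * y / 2 + X ^ 2 * Y * w 1 / 2 + X * Y * Z * u1) * w1
    + (X * Y ^ 2 * z / 2 + X ^ 2 * Y * w 2 / 2 + X * Y * Z * u2) * w2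

/-- general cubic with nonzero `z^3` coefficient -/
lemma hes_top (F : ℂ → ℂ → ℂ → ℂ) (c0 c1 c2 c3 c4 c5 c6 c7 c8 c9 : ℂ) (h2 : c2 ≠ 0)
    (hF : ∀ x y z, F x y z = c0 * x ^ 3 + c1 * y ^ 3 + c2 * z ^ 3 + c3 * x ^ 2 * y
      + c4 * x ^ 2 * z + c5 * x * y ^ 2 + c6 * y ^ 2 * z + c7 * x * z ^ 2 + c8 * y * z ^ 2
      + c9 * x * y * z)
    (hs : ¬ SingF F) : HesF F := by
  obtain ⟨σ, hσ⟩ := exists_cbrt' c2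
  have hσ0 : σ ≠ 0 := by
    rintro rfl
    apply h2; rw [← hσ]; norm_num
  subst hσ
  -- z = Z / σ - A x - B y
  obtain ⟨A, hA⟩ : ∃ A, c7 = 3 * σ ^ 3 * A := ⟨c7 / (3 * σ ^ 3), by field_simp⟩
  obtain ⟨B, hB⟩ : ∃ B, c8 = 3 * σ ^ 3 * B := ⟨c8 / (3 * σ ^ 3), by field_simp⟩
  have hdet : (!![1, 0, 0; 0, 1, 0; -A, -B, 1 / σ] : Matrix (Fin 3) (Fin 3) ℂ).det ≠ 0 := by
    simp [Matrix.det_fin_three, hσ0]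
  apply HesF.of_act hdet
  apply hes_monic _ ((3 * σ ^ 3 * A ^ 2 + c4 - 2 * c7 * A) / σ)
    ((6 * σ ^ 3 * A * B + c9 - 2 * c7 * B - 2 * c8 * A) / σ)
    ((3 * σ ^ 3 * B ^ 2 + c6 - 2 * c8 * B) / σ)
    (c0 - σ ^ 3 * A ^ 3 - c4 * A + c7 * A ^ 2)
    (c3 - 3 * σ ^ 3 * A ^ 2 * B - c4 * B - c9 * A + 2 * c7 * A * B + c8 * A ^ 2)
    (c5 - 3 * σ ^ 3 * A * B ^ 2 - c6 * A - c9 * B + 2 * c8 * A * B + c7 * B ^ 2)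
    (c1 - σ ^ 3 * B ^ 3 - c6 * B + c8 * B ^ 2)
    _ (fun h => hs (h.of_act hdet))
  intro x y z
  simp [actM, hF]
  rw [hA, hB]
  field_simp
  ring

lemma hes_cubic (F : ℂ → ℂ → ℂ → ℂ) (c0 c1 c2 c3 c4 c5 c6 c7 c8 c9 : ℂ)
    (hF : ∀ x y z, F x y z = c0 * x ^ 3 + c1 * y ^ 3 + c2 * z ^ 3 + c3 * x ^ 2 * y
      + c4 * x ^ 2 * z + c5 * x * y ^ 2 + c6 * y ^ 2 * z + c7 * x * z ^ 2 + c8 * y * z ^ 2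
      + c9 * x * y * z)
    (hs : ¬ SingF F) : HesF F := by
  obtain ⟨p, q, hpq⟩ : ∃ p q, F p q 1 ≠ 0 := by
    by_contra! hcon
    apply hs
    -- F vanishes identically
    have hz : ∀ x y z, z ≠ 0 → F x y z = 0 := by
      intro x y z hz
      have := hcon (x / z) (y / z)
      rw [hF] at this
      rw [hF]
      field_simp at this
      linear_combination this
    have hall : ∀ x y z, F x y z = 0 := by
      intro x y z
      have : (fun z => F x y z) = fun z => 0 := by
        apply Continuous.ext_on (dense_compl_singleton (0 : ℂ)) _ (by fun_prop)
        · intro z hz'; exact hz x y z hz'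
        · simp only [hF]; fun_prop
      exact congrFun this z
    exact ⟨1, 0, 0, by simp, fun x y z => ⟨0, 0, fun t => by rw [hall]; simp⟩⟩
  have hdet : (!![1, 0, p; 0, 1, q; 0, 0, 1] : Matrix (Fin 3) (Fin 3) ℂ).det ≠ 0 := by
    simp [Matrix.det_fin_three]
  apply HesF.of_act hdet
  apply hes_top _ c0 c1 (F p q 1) c3 (3 * c0 * p + c3 * q + c4) c5 (3 * c1 * q + c5 * p + c6)
    (3 * c0 * p ^ 2 + 2 * c3 * p * q + 2 * c4 * p + c5 * q ^ 2 + c7 + c9 * q)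
    (3 * c1 * q ^ 2 + c3 * p ^ 2 + 2 * c5 * p * q + 2 * c6 * q + c8 + c9 * p)
    (2 * c3 * p + 2 * c5 * q + c9) hpq _ (fun h => hs (h.of_act hdet))
  intro x y z
  simp [actM, hF]
  ring



lemma cubic_explicit (f : MvPolynomial (Fin 3) ℂ) (hf : f.IsHomogeneous 3) :
    ∃ c0 c1 c2 c3 c4 c5 c6 c7 c8 c9 : ℂ,
      f = C c0 * X 0 ^ 3 + C c1 * X 1 ^ 3 + C c2 * X 2 ^ 3 + C c3 * X 0 ^ 2 * X 1
      + C c4 * X 0 ^ 2 * X 2 + C c5 * X 0 * X 1 ^ 2 + C c6 * X 1 ^ 2 * X 2 + C c7 * X 0 * X 2 ^ 2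
      + C c8 * X 1 * X 2 ^ 2 + C c9 * X 0 * X 1 * X 2 := by
  rw [f.as_sum]
  apply Finset.sum_induction _ (fun f : MvPolynomial (Fin 3) ℂ =>
    ∃ c0 c1 c2 c3 c4 c5 c6 c7 c8 c9 : ℂ,
      f = C c0 * X 0 ^ 3 + C c1 * X 1 ^ 3 + C c2 * X 2 ^ 3 + C c3 * X 0 ^ 2 * X 1
      + C c4 * X 0 ^ 2 * X 2 + C c5 * X 0 * X 1 ^ 2 + C c6 * X 1 ^ 2 * X 2 + C c7 * X 0 * X 2 ^ 2
      + C c8 * X 1 * X 2 ^ 2 + C c9 * X 0 * X 1 * X 2)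
  · rintro a b ⟨c0, c1, c2, c3, c4, c5, c6, c7, c8, c9, h⟩
      ⟨d0, d1, d2, d3, d4, d5, d6, d7, d8, d9, h'⟩
    refine ⟨c0 + d0, c1 + d1, c2 + d2, c3 + d3, c4 + d4, c5 + d5, c6 + d6, c7 + d7, c8 + d8,
      c9 + d9, ?_⟩
    rw [h, h']
    simp only [C_add]
    ring
  · exact ⟨0, 0, 0, 0, 0, 0, 0, 0, 0, 0, by simp⟩
  · intro d hd
    have hdeg := hf (mem_support_iff.mp hd)
    have hsum : d 0 + d 1 + d 2 = 3 := by
      rw [Finsupp.weight_apply, Finsupp.sum_fintype _ _ (by simp)] at hdeg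
      simpa [Fin.sum_univ_three] using hdeg
    rw [monomial_eq, Finsupp.prod_fintype _ _ (by simp), Fin.prod_univ_three]
    generalize coeff d f = c
    generalize d 0 = n0 at *
    generalize d 1 = n1 at *
    generalize d 2 = n2 at *
    refine ⟨if n0 = 3 then c else 0, if n1 = 3 then c else 0, if n2 = 3 then c else 0,
      if n0 = 2 ∧ n1 = 1 then c else 0, if n0 = 2 ∧ n2 = 1 then c else 0,
      if n0 = 1 ∧ n1 = 2 then c else 0, if n1 = 2 ∧ n2 = 1 then c else 0,
      if n0 = 1 ∧ n2 = 2 then c else 0, if n1 = 1 ∧ n2 = 2 then c else 0,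
      if n0 = 1 ∧ n1 = 1 then c else 0, ?_⟩
    have h0 : n0 ≤ 3 := by omega
    have h1 : n1 ≤ 3 := by omega
    obtain rfl : n2 = 3 - n0 - n1 := by omega
    interval_cases n0 <;> interval_cases n1 <;> first | omega | (simp <;> ring)

end HesseAux

/-- Every smooth plane cubic is projectively equivalent to a member of the Hesse pencil
`α(x₀³+x₁³+x₂³) + β·x₀x₁x₂`. -/
theorem smooth_cubic_equivalent_to_hesse (f : MvPolynomial (Fin 3) ℂ)
    (hdeg : f.IsHomogeneous 3) (hsm : IsSmoothCubic f) :
    ∃ (g : Matrix.SpecialLinearGroup (Fin 3) ℂ) (α β : ℂ), (α, β) ≠ (0, 0) ∧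
      substSL g f =
        C α * ((X 0) ^ 3 + (X 1) ^ 3 + (X 2) ^ 3) + C β * (X 0 * X 1 * X 2) := by
  obtain ⟨c0, c1, c2, c3, c4, c5, c6, c7, c8, c9, hf⟩ := cubic_explicit f hdeg
  have hF : ∀ x y z, eval ![x, y, z] f = c0 * x ^ 3 + c1 * y ^ 3 + c2 * z ^ 3 + c3 * x ^ 2 * y
      + c4 * x ^ 2 * z + c5 * x * y ^ 2 + c6 * y ^ 2 * z + c7 * x * z ^ 2 + c8 * y * z ^ 2
      + c9 * x * y * z := by
    intro x y z; rw [hf]; simp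
  have hs : ¬ SingF (fun x y z => eval ![x, y, z] f) := by
    rintro ⟨a, b, c, h0, h⟩
    have extract : ∀ A B D k l : ℂ, (∀ t : ℂ, t * A + t ^ 2 * B + t ^ 3 * D = t ^ 2 * k + t ^ 3 * l) →
        A = 0 := by
      intro A B D k l ht
      linear_combination ht 1 - ht (-1) / 3 - ht 2 / 6
    have hz : eval ![a, b, c] f = 0 := by
      obtain ⟨k, l, hk⟩ := h 0 0 0
      simpa using hk 0
    obtain ⟨i, hi⟩ := hsm ![a, b, c] (by
      intro hv
      exact h0 ⟨congrFun hv 0, congrFun hv 1, congrFun hv 2⟩) hz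
    apply hi
    rw [hF] at hz
    simp only [hF] at h
    fin_cases i
    · obtain ⟨k, l, hk⟩ := h 1 0 0
      apply extract _ (3 * c0 * a + c3 * b + c4 * c) c0 k l
      intro t
      rw [← hk t, hf]
      simp [pderiv_X]
      linear_combination -hz
    · obtain ⟨k, l, hk⟩ := h 0 1 0
      apply extract _ (3 * c1 * b + c5 * a + c6 * c) c1 k l
      intro t
      rw [← hk t, hf]
      simp [pderiv_X]
      linear_combination -hz
    · obtain ⟨k, l, hk⟩ := h 0 0 1
      apply extract _ (3 * c2 * c + c7 * a + c8 * b) c2 k l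
      intro t
      rw [← hk t, hf]
      simp [pderiv_X]
      linear_combination -hz
  obtain ⟨M, hM, α, β, hα, h⟩ := hes_cubic _ _ _ _ _ _ _ _ _ _ _ hF hs
  obtain ⟨ρ, hρ⟩ := exists_cbrt' (1 / M.det)
  have hρ0 : ρ ≠ 0 := by
    rintro rfl
    apply one_div_ne_zero hM; rw [← hρ]; norm_num
  refine ⟨⟨ρ • M, ?_⟩, ρ ^ 3 * α, ρ ^ 3 * β, ?_, ?_⟩
  · rw [Matrix.det_smul, Fintype.card_fin, hρ]; field_simp
  · intro hh
    simp [hρ0, hα] at hh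
  · apply MvPolynomial.funext
    intro v
    have := h (ρ * v 0) (ρ * v 1) (ρ * v 2)
    simp only [actM, hF] at this
    simp only [substSL]
    rw [hf]
    simp [Fin.sum_univ_three]
    linear_combination this
end

section
/- Let (α,β) ∈ ℂ² with (α,β) ≠ (0,0) and let f = α·(x₀³+x₁³+x₂³) + β·x₀x₁x₂. Then f is a smooth cubic form (i.e., C(f) is an elliptic curve) if and only if α ≠ 0 and β³ ≠ −27·α³ (equivalently, β/α ∉ {−3, −3ε, −3ε²}). -/
open MvPolynomial

/-- The member `α(x₀³+x₁³+x₂³) + β·x₀x₁x₂` of the Hesse pencil is a smooth cubic (i.e. an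
elliptic curve) iff `α ≠ 0` and `β³ ≠ −27·α³`. -/
theorem hesse_member_smooth_iff (α β : ℂ) (hαβ : (α, β) ≠ (0, 0)) :
    IsSmoothCubic
        (C α * ((X 0) ^ 3 + (X 1) ^ 3 + (X 2) ^ 3) + C β * (X 0 * X 1 * X 2)) ↔
      α ≠ 0 ∧ β ^ 3 ≠ -27 * α ^ 3 := by
  have e0 : ∀ v : Fin 3 → ℂ, eval v (pderiv 0 (C α * ((X 0) ^ 3 + (X 1) ^ 3 + (X 2) ^ 3) + C β * (X 0 * X 1 * X 2) : MvPolynomial (Fin 3) ℂ)) = 3 * α * v 0 ^ 2 + β * (v 1 * v 2) := by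
    intro v
    simp [pderiv_X, Derivation.leibniz, Derivation.leibniz_pow]
    ring
  have e1 : ∀ v : Fin 3 → ℂ, eval v (pderiv 1 (C α * ((X 0) ^ 3 + (X 1) ^ 3 + (X 2) ^ 3) + C β * (X 0 * X 1 * X 2) : MvPolynomial (Fin 3) ℂ)) = 3 * α * v 1 ^ 2 + β * (v 0 * v 2) := by
    intro v
    simp [pderiv_X, Derivation.leibniz, Derivation.leibniz_pow]
    ring
  have e2 : ∀ v : Fin 3 → ℂ, eval v (pderiv 2 (C α * ((X 0) ^ 3 + (X 1) ^ 3 + (X 2) ^ 3) + C β * (X 0 * X 1 * X 2) : MvPolynomial (Fin 3) ℂ)) = 3 * α * v 2 ^ 2 + β * (v 0 * v 1) := by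
    intro v
    simp [pderiv_X, Derivation.leibniz, Derivation.leibniz_pow]
    ring
  unfold IsSmoothCubic
  simp only [Fin.exists_fin_succ, Fin.succ_zero_eq_one, Fin.succ_one_eq_two, IsEmpty.exists_iff,
    or_false, e0, e1, e2]
  constructor
  · intro h
    have hα : α ≠ 0 := by
      rintro rfl
      have := h ![1, 0, 0] (fun h => by simpa using congrFun h 0) (by simp)
      simp at this
    refine ⟨hα, fun hβ => ?_⟩
    have := h ![-3 * α, β, β] (fun h => hα (by simpa using congrFun h 0))
      (by simp; linear_combination (-α) * hβ)
    simp at this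
    rcases this with h | h
    · exact h (by linear_combination hβ)
    · exact h (by ring)
  · rintro ⟨hα, hβ⟩ v hv -
    by_contra! hc
    obtain ⟨h0, h1, h2⟩ := hc
    apply hv
    have hp : (β ^ 3 + 27 * α ^ 3) * (v 0 * v 1 * v 2) ^ 2 = 0 := by
      linear_combination 9 * α ^ 2 * v 1 ^ 2 * v 2 ^ 2 * h0 - 3 * α * β * v 1 * v 2 ^ 3 * h1 + β ^ 2 * v 0 * v 1 * v 2 ^ 2 * h2
    have hn : β ^ 3 + 27 * α ^ 3 ≠ 0 := fun h => hβ (by linear_combination h)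
    have hx : v 0 * v 1 * v 2 = 0 := by simpa [hn] using hp
    have k : ∀ i, v i = 0 := by
      have c0 : v 0 ^ 3 = 0 := mul_left_cancel₀ hα (by linear_combination (1/3) * v 0 * h0 - β / 3 * hx)
      have c1 : v 1 ^ 3 = 0 := mul_left_cancel₀ hα (by linear_combination (1/3) * v 1 * h1 - β / 3 * hx)
      have c2 : v 2 ^ 3 = 0 := mul_left_cancel₀ hα (by linear_combination (1/3) * v 2 * h2 - β / 3 * hx)
      intro i
      fin_cases i
      · exact pow_eq_zero_iff (by norm_num) |>.1 c0
      · exact pow_eq_zero_iff (by norm_num) |>.1 c1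
      · exact pow_eq_zero_iff (by norm_num) |>.1 c2
    exact funext k
end

section
/- A homogeneous polynomial f of degree 3 in MvPolynomial (Fin 3) ℂ vanishes at all nine vectors t_{i,j}, (i,j) ∈ 𝔽₃ × 𝔽₃, if and only if f belongs to the Hesse pencil L, i.e., f = α·(x₀³+x₁³+x₂³) + β·x₀x₁x₂ for some α, β ∈ ℂ. -/
open MvPolynomial

/-- The nine flexes `t_{i,j}` of the Hesse configuration, indexed by `𝔽₃ × 𝔽₃`:
`t_{0,j} = (0, −εʲ, 1)`, `t_{1,j} = (1, 0, −εʲ)`, `t_{2,j} = (−εʲ, 1, 0)`. -/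
noncomputable def tpt (ε : ℂ) (ij : ZMod 3 × ZMod 3) : Fin 3 → ℂ :=
  ![![0, -(ε ^ ij.2.val), 1], ![1, 0, -(ε ^ ij.2.val)], ![-(ε ^ ij.2.val), 1, 0]]
    ⟨ij.1.val, ZMod.val_lt ij.1⟩

lemma cubic_expand (f : MvPolynomial (Fin 3) ℂ) (hdeg : f.IsHomogeneous 3) :
    ∃ a b c p q r s t u m : ℂ,
      f = C a * X 0 ^ 3 + C b * X 1 ^ 3 + C c * X 2 ^ 3
        + C p * (X 1 ^ 2 * X 2) + C q * (X 1 * X 2 ^ 2)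
        + C r * (X 2 ^ 2 * X 0) + C s * (X 2 * X 0 ^ 2)
        + C t * (X 0 ^ 2 * X 1) + C u * (X 0 * X 1 ^ 2)
        + C m * (X 0 * X 1 * X 2) := by
  rw [f.as_sum]
  refine Finset.sum_induction _ (fun g => ∃ a b c p q r s t u m : ℂ,
      g = C a * X 0 ^ 3 + C b * X 1 ^ 3 + C c * X 2 ^ 3
        + C p * (X 1 ^ 2 * X 2) + C q * (X 1 * X 2 ^ 2)
        + C r * (X 2 ^ 2 * X 0) + C s * (X 2 * X 0 ^ 2)
        + C t * (X 0 ^ 2 * X 1) + C u * (X 0 * X 1 ^ 2)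
        + C m * (X 0 * X 1 * X 2)) ?_ ?_ ?_
  · rintro _ _ ⟨a, b, c, p, q, r, s, t, u, m, rfl⟩ ⟨a', b', c', p', q', r', s', t', u', m', rfl⟩
    refine ⟨a + a', b + b', c + c', p + p', q + q', r + r', s + s', t + t', u + u', m + m', ?_⟩
    simp only [C_add]
    ring
  · exact ⟨0, 0, 0, 0, 0, 0, 0, 0, 0, 0, by simp⟩
  · intro d hd
    have h3 : d 0 + d 1 + d 2 = 3 := by
      have h := hdeg (mem_support_iff.mp hd)
      change Finsupp.weight (fun _ => 1) d = 3 at h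
      rw [← Finsupp.degree_eq_weight_one] at h
      simpa [Finsupp.degree_eq_sum, Fin.sum_univ_three] using h
    generalize coeff d f = k
    have hm : monomial d k = C k * (X 0 ^ d 0 * X 1 ^ d 1 * X 2 ^ d 2) := by
      rw [monomial_eq, Finsupp.prod_fintype _ _ (by simp), Fin.prod_univ_three]
    rw [hm]
    generalize d 0 = x at *
    generalize d 1 = y at *
    obtain rfl | ⟨rfl⟩ | ⟨rfl⟩ | ⟨rfl⟩ : x = 0 ∨ x = 1 ∨ x = 2 ∨ x = 3 := by omega
    · obtain rfl | rfl | rfl | rfl : y = 0 ∨ y = 1 ∨ y = 2 ∨ y = 3 := by omega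
      · rw [show d 2 = 3 by omega]
        exact ⟨0, 0, k, 0, 0, 0, 0, 0, 0, 0, by simp⟩
      · rw [show d 2 = 2 by omega]
        exact ⟨0, 0, 0, 0, k, 0, 0, 0, 0, 0, by simp⟩
      · rw [show d 2 = 1 by omega]
        exact ⟨0, 0, 0, k, 0, 0, 0, 0, 0, 0, by simp⟩
      · rw [show d 2 = 0 by omega]
        exact ⟨0, k, 0, 0, 0, 0, 0, 0, 0, 0, by simp⟩
    · obtain rfl | rfl | rfl : y = 0 ∨ y = 1 ∨ y = 2 := by omega
      · rw [show d 2 = 2 by omega]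
        exact ⟨0, 0, 0, 0, 0, k, 0, 0, 0, 0, by simp only [C_0]; ring⟩
      · rw [show d 2 = 1 by omega]
        exact ⟨0, 0, 0, 0, 0, 0, 0, 0, 0, k, by simp⟩
      · rw [show d 2 = 0 by omega]
        exact ⟨0, 0, 0, 0, 0, 0, 0, 0, k, 0, by simp⟩
    · obtain rfl | rfl : y = 0 ∨ y = 1 := by omega
      · rw [show d 2 = 1 by omega]
        exact ⟨0, 0, 0, 0, 0, 0, k, 0, 0, 0, by simp only [C_0]; ring⟩
      · rw [show d 2 = 0 by omega]
        exact ⟨0, 0, 0, 0, 0, 0, 0, k, 0, 0, by simp⟩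
    · obtain rfl : y = 0 := by omega
      rw [show d 2 = 0 by omega]
      exact ⟨k, 0, 0, 0, 0, 0, 0, 0, 0, 0, by simp⟩

lemma line_aux (ε : ℂ) (h1 : 1 + ε + ε ^ 2 = 0) (a b c d : ℂ)
    (h : ∀ j : ℕ, j < 3 → a * (-(ε ^ j)) ^ 3 + d + b * (-(ε ^ j)) ^ 2 + c * (-(ε ^ j)) = 0) :
    a = d ∧ b = 0 ∧ c = 0 := by
  have e3 : ε ^ 3 = 1 := by linear_combination (ε - 1) * h1
  have h0 : -a + d + b - c = 0 := by linear_combination h 0 (by norm_num)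
  have h2 : -a + d + b * ε ^ 2 - c * ε = 0 := by
    linear_combination h 1 (by norm_num) + a * e3
  have h4 : -a + d + b * ε - c * ε ^ 2 = 0 := by
    linear_combination h 2 (by norm_num) + a * (ε ^ 3 + 1) * e3 - b * ε * e3
  refine ⟨?_, ?_, ?_⟩
  · linear_combination (-1 / 3 : ℂ) * (h0 + h2 + h4) + (b - c) / 3 * h1
  · linear_combination (1 / 3 : ℂ) * (h0 + ε * h2 + ε ^ 2 * h4)
      + (a - d + c) / 3 * h1 - 2 * b / 3 * e3
      + c / 3 * ε * e3
  · linear_combination (-1 / 3 : ℂ) * (h0 + ε ^ 2 * h2 + ε * h4)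
      + (d - a + b) / 3 * h1 - 2 * c / 3 * e3 + b / 3 * ε * e3

/-- A cubic form vanishes at all nine points `t_{i,j}` iff it belongs to the Hesse pencil
`{α(x₀³+x₁³+x₂³) + β·x₀x₁x₂}`. -/
theorem vanishes_at_flexes_iff_mem_hesse_pencil (ε : ℂ) (hε : IsPrimitiveRoot ε 3)
    (f : MvPolynomial (Fin 3) ℂ) (hdeg : f.IsHomogeneous 3) :
    (∀ ij : ZMod 3 × ZMod 3, eval (tpt ε ij) f = 0) ↔
      ∃ α β : ℂ,
        f = C α * ((X 0) ^ 3 + (X 1) ^ 3 + (X 2) ^ 3) + C β * (X 0 * X 1 * X 2) := by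
  have h1 : 1 + ε + ε ^ 2 = 0 := by
    have := hε.geom_sum_eq_zero (by norm_num)
    simpa [Finset.sum_range_succ] using this
  have t0 : ∀ j : ZMod 3, tpt ε (0, j) = ![0, -(ε ^ j.val), 1] := fun j => rfl
  have t1 : ∀ j : ZMod 3, tpt ε (1, j) = ![1, 0, -(ε ^ j.val)] := fun j => rfl
  have t2 : ∀ j : ZMod 3, tpt ε (2, j) = ![-(ε ^ j.val), 1, 0] := fun j => rfl
  constructor
  · intro h
    obtain ⟨a, b, c, p, q, r, s, t, u, m, rfl⟩ := cubic_expand f hdeg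
    have hv : ∀ j : ℕ, j < 3 → ((j : ZMod 3)).val = j := fun j hj => ZMod.val_cast_of_lt hj
    obtain ⟨e1, rfl, rfl⟩ := line_aux ε h1 b p q c (fun j hj => by
      have := h (0, (j : ZMod 3))
      rw [t0, hv j hj] at this
      simp at this
      linear_combination this)
    obtain ⟨e2, rfl, rfl⟩ := line_aux ε h1 c r s a (fun j hj => by
      have := h (1, (j : ZMod 3))
      rw [t1, hv j hj] at this
      simp at this
      linear_combination this)
    obtain ⟨e3, rfl, rfl⟩ := line_aux ε h1 a t u b (fun j hj => by
      have := h (2, (j : ZMod 3))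
      rw [t2, hv j hj] at this
      simp at this
      linear_combination this)
    subst e1 e2
    refine ⟨b, m, ?_⟩
    simp only [C_0]
    ring
  · rintro ⟨α, β, rfl⟩ ⟨i, j⟩
    have e3 : (ε ^ j.val) ^ 3 = 1 := by
      rw [← pow_mul, mul_comm, pow_mul, hε.pow_eq_one, one_pow]
    have hi : i = 0 ∨ i = 1 ∨ i = 2 := by revert i; decide
    rcases hi with rfl | rfl | rfl
    · rw [t0]; simp; right; linear_combination -e3
    · rw [t1]; simp; right; linear_combination -e3
    · rw [t2]; simp; right; linear_combination -e3
end

section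
/- Let α, β ∈ ℂ with α ≠ 0 and β³ ≠ −27·α³, and let f = α·(x₀³+x₁³+x₂³) + β·x₀x₁x₂ (a smooth member of the Hesse pencil). Then for every nonzero v ∈ ℂ³: f(v) = 0 and H_f(v) = 0 hold if and only if v = c·t_{i,j} for some nonzero c ∈ ℂ and some (i,j) ∈ 𝔽₃ × 𝔽₃. (The set of flexes of every smooth member of the Hesse pencil is exactly the nine points t_{i,j}.) -/
open MvPolynomial

/-- The Hessian `H_f = det (∂²f/∂xᵢ∂xⱼ)` of a cubic form `f`. -/
noncomputable def hess (f : MvPolynomial (Fin 3) ℂ) : MvPolynomial (Fin 3) ℂ :=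
  Matrix.det (Matrix.of fun i j : Fin 3 => pderiv i (pderiv j f))

theorem hess_eval_aux (α β : ℂ) (v : Fin 3 → ℂ) :
    eval v (hess (C α * ((X 0) ^ 3 + (X 1) ^ 3 + (X 2) ^ 3) + C β * (X 0 * X 1 * X 2))) =
      (216 * α ^ 3 + 2 * β ^ 3) * (v 0 * v 1 * v 2)
        - 6 * α * β ^ 2 * (v 0 ^ 3 + v 1 ^ 3 + v 2 ^ 3) := by
  have e3 : ∀ i : Fin 3, pderiv i (3 : MvPolynomial (Fin 3) ℂ) = 0 := fun i => by
    simpa using (pderiv i).map_natCast 3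
  simp [hess, Matrix.det_fin_three, pderiv_X, Pi.single_apply, e3, Derivation.leibniz,
    Derivation.leibniz_pow]
  ring

theorem root_aux (ε : ℂ) (hε : IsPrimitiveRoot ε 3) (a b : ℂ) (hb : b ≠ 0)
    (h : a ^ 3 + b ^ 3 = 0) : ∃ j : ZMod 3, a = b * -(ε ^ j.val) := by
  have h1 : (-a / b) ^ 3 = 1 := by
    field_simp
    linear_combination -h
  obtain ⟨i, hi, h2⟩ := hε.eq_pow_of_pow_eq_one h1
  refine ⟨(i : ZMod 3), ?_⟩
  rw [ZMod.val_natCast, Nat.mod_eq_of_lt hi, h2]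
  field_simp

theorem cube_aux (ε : ℂ) (hε : IsPrimitiveRoot ε 3) (n : ℕ) : (ε ^ n) ^ 3 = 1 := by
  rw [← pow_mul, mul_comm, pow_mul, hε.pow_eq_one, one_pow]

/-- The set of flexes of every smooth member of the Hesse pencil consists exactly of the
nine points `t_{i,j}`: a nonzero `v` satisfies `f(v) = H_f(v) = 0` iff it is a nonzero
multiple of some `t_{i,j}`. -/
theorem flexes_of_smooth_hesse_member (ε : ℂ) (hε : IsPrimitiveRoot ε 3) (α β : ℂ)
    (hα : α ≠ 0) (hβ : β ^ 3 ≠ -27 * α ^ 3) :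
    ∀ v : Fin 3 → ℂ, v ≠ 0 →
      ((eval v (C α * ((X 0) ^ 3 + (X 1) ^ 3 + (X 2) ^ 3) + C β * (X 0 * X 1 * X 2)) = 0 ∧
          eval v (hess (C α * ((X 0) ^ 3 + (X 1) ^ 3 + (X 2) ^ 3)
            + C β * (X 0 * X 1 * X 2))) = 0) ↔
        ∃ (c : ℂ) (ij : ZMod 3 × ZMod 3), c ≠ 0 ∧ v = c • tpt ε ij) := by
  intro v hv
  rw [hess_eval_aux]
  simp only [map_add, map_mul, map_pow, eval_C, eval_X]
  constructor
  · rintro ⟨h1, h2⟩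
    have hne : β ^ 3 + 27 * α ^ 3 ≠ 0 := fun h => hβ (by linear_combination h)
    have hp : v 0 * v 1 * v 2 = 0 := by
      have : (β ^ 3 + 27 * α ^ 3) * (v 0 * v 1 * v 2) = 0 := by
        linear_combination (1 / 8) * h2 + (6 / 8) * β ^ 2 * h1
      exact (mul_eq_zero.mp this).resolve_left hne
    have hs : v 0 ^ 3 + v 1 ^ 3 + v 2 ^ 3 = 0 := by
      have : α * (v 0 ^ 3 + v 1 ^ 3 + v 2 ^ 3) = 0 := by
        linear_combination h1 - β * hp
      exact (mul_eq_zero.mp this).resolve_left hα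
    have key : ∀ a b : ℂ, a ^ 3 + b ^ 3 = 0 → b = 0 → a = 0 := by
      intro a b h hb
      subst hb
      simpa using h
    rcases mul_eq_zero.mp hp with h | h2
    · rcases mul_eq_zero.mp h with h0 | h1
      · have hs' : v 1 ^ 3 + v 2 ^ 3 = 0 := by simpa [h0] using hs
        have hb : v 2 ≠ 0 := fun hb => hv (by
          have := key _ _ hs' hb
          ext i; fin_cases i <;> simp [*])
        obtain ⟨j, hj⟩ := root_aux ε hε _ _ hb hs'
        refine ⟨v 2, (0, j), hb, ?_⟩
        ext i
        fin_cases i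
        · simpa [tpt] using h0
        · simpa [tpt] using hj
        · simp [tpt]
      · have hs' : v 2 ^ 3 + v 0 ^ 3 = 0 := by
          rw [h1] at hs; linear_combination hs
        have hb : v 0 ≠ 0 := fun hb => hv (by
          have := key _ _ hs' hb
          ext i; fin_cases i <;> simp [*])
        obtain ⟨j, hj⟩ := root_aux ε hε _ _ hb hs'
        refine ⟨v 0, (1, j), hb, ?_⟩
        have e : tpt ε (1, j) = ![1, 0, -(ε ^ j.val)] := rfl
        rw [e]
        ext i
        fin_cases i
        · simp
        · simpa using h1
        · simpa using hj
    · have hs' : v 0 ^ 3 + v 1 ^ 3 = 0 := by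
        rw [h2] at hs; linear_combination hs
      have hb : v 1 ≠ 0 := fun hb => hv (by
        have := key _ _ hs' hb
        ext i; fin_cases i <;> simp [*])
      obtain ⟨j, hj⟩ := root_aux ε hε _ _ hb hs'
      refine ⟨v 1, (2, j), hb, ?_⟩
      have e : tpt ε (2, j) = ![-(ε ^ j.val), 1, 0] := rfl
      rw [e]
      ext i
      fin_cases i
      · simpa using hj
      · simp
      · simpa using h2
  · rintro ⟨c, ⟨i, j⟩, hc, rfl⟩
    have h3 := cube_aux ε hε j.val
    have hps : tpt ε (i, j) 0 * tpt ε (i, j) 1 * tpt ε (i, j) 2 = 0 ∧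
        tpt ε (i, j) 0 ^ 3 + tpt ε (i, j) 1 ^ 3 + tpt ε (i, j) 2 ^ 3 = 0 := by
      have e0 : tpt ε (0, j) = ![0, -(ε ^ j.val), 1] := rfl
      have e1 : tpt ε (1, j) = ![1, 0, -(ε ^ j.val)] := rfl
      have e2 : tpt ε (2, j) = ![-(ε ^ j.val), 1, 0] := rfl
      have hi : i = 0 ∨ i = 1 ∨ i = 2 := by clear hv; revert i; decide
      rcases hi with rfl | rfl | rfl
      · rw [e0]; constructor
        · simp
        · simp only [Matrix.cons_val]; linear_combination -h3
      · rw [e1]; constructor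
        · simp
        · simp only [Matrix.cons_val]; linear_combination -h3
      · rw [e2]; constructor
        · simp
        · simp only [Matrix.cons_val]; linear_combination -h3
    obtain ⟨hp, hs⟩ := hps
    simp only [Pi.smul_apply, smul_eq_mul]
    constructor
    · linear_combination α * c ^ 3 * hs + β * c ^ 3 * hp
    · linear_combination (216 * α ^ 3 + 2 * β ^ 3) * c ^ 3 * hp - 6 * α * β ^ 2 * c ^ 3 * hs
end

section
/- Let l : ℂ³ → ℂ be a nonzero linear form and suppose that l(t_{i,j}) = 0 and l(t_{k,m}) = 0 for two distinct index pairs (i,j) ≠ (k,m) in 𝔽₃ × 𝔽₃. Then l is a nonzero scalar multiple of one of the twelve listed linear forms. (Every line in ℙ²(ℂ) containing two distinct flexes of the Hesse configuration is one of the twelve lines.) -/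
open MvPolynomial

/-- The coefficient vectors of the twelve linear forms of the Hesse configuration
(the irreducible factors of the four singular members of the Hesse pencil). -/
noncomputable def lform (ε : ℂ) : Fin 12 → Fin 3 → ℂ :=
  ![![1, 0, 0], ![0, 1, 0], ![0, 0, 1],
    ![1, 1, 1], ![1, ε, ε ^ 2], ![1, ε ^ 2, ε],
    ![1, 1, ε], ![1, ε, 1], ![1, ε ^ 2, ε ^ 2],
    ![1, 1, ε ^ 2], ![1, ε, ε], ![1, ε ^ 2, 1]]

theorem aux_mul (ε : ℂ) (h3 : ε ^ 3 = 1) (l : Fin 3 → ℂ) (hl : l ≠ 0) (m n : ℕ)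
    (h1 : l 1 = l 0 * ε ^ m) (h2 : l 2 = l 0 * ε ^ n) :
    ∃ (c : ℂ) (k : Fin 12), c ≠ 0 ∧ l = c • lform ε k := by
  have h0 : l 0 ≠ 0 := by
    intro h
    apply hl
    funext i
    fin_cases i <;> simp [h, h1, h2]
  have red : ∀ r : ℕ, ε ^ r = ε ^ (r % 3) := fun r => pow_eq_pow_mod r h3
  rw [red] at h1 h2
  have hm : m % 3 < 3 := Nat.mod_lt _ (by norm_num)
  have hn : n % 3 < 3 := Nat.mod_lt _ (by norm_num)
  have key : ∃ k : Fin 12, lform ε k = ![1, ε ^ (m % 3), ε ^ (n % 3)] := by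
    generalize m % 3 = a at hm
    generalize n % 3 = b at hn
    interval_cases a <;> interval_cases b
    · exact ⟨3, by simp [lform]⟩
    · exact ⟨6, by simp [lform]⟩
    · exact ⟨9, by simp [lform]⟩
    · exact ⟨7, by simp [lform]⟩
    · exact ⟨10, by simp [lform]⟩
    · exact ⟨4, by simp [lform]⟩
    · exact ⟨11, by simp [lform]⟩
    · exact ⟨5, by simp [lform]⟩
    · exact ⟨8, by simp [lform]⟩
  obtain ⟨k, hk⟩ := key
  refine ⟨l 0, k, h0, ?_⟩
  rw [hk]
  funext i
  fin_cases i <;> simp [h1, h2]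

theorem aux_single (ε : ℂ) (l : Fin 3 → ℂ) (hl : l ≠ 0) (i : Fin 3)
    (h : ∀ j, j ≠ i → l j = 0) :
    ∃ (c : ℂ) (k : Fin 12), c ≠ 0 ∧ l = c • lform ε k := by
  have hi : l i ≠ 0 := by
    intro h0
    apply hl
    funext j
    by_cases hj : j = i
    · simp [hj, h0]
    · simp [h j hj]
  refine ⟨l i, ⟨i.val, by omega⟩, hi, ?_⟩
  funext j
  fin_cases i <;> fin_cases j <;> simp [lform] <;> exact h _ (by decide)

theorem tpt_cases (ε : ℂ) (l : Fin 3 → ℂ) (p : ZMod 3 × ZMod 3)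
    (hp : ∑ i : Fin 3, l i * tpt ε p i = 0) :
    (p.1 = 0 ∧ l 2 = l 1 * ε ^ p.2.val) ∨ (p.1 = 1 ∧ l 0 = l 2 * ε ^ p.2.val) ∨
      (p.1 = 2 ∧ l 1 = l 0 * ε ^ p.2.val) := by
  obtain ⟨i, j⟩ := p
  have hi : i = 0 ∨ i = 1 ∨ i = 2 := by clear hp; revert i; decide
  rw [Fin.sum_univ_three] at hp
  rcases hi with rfl | rfl | rfl
  · left
    change l 0 * 0 + l 1 * -(ε ^ j.val) + l 2 * 1 = 0 at hp
    exact ⟨rfl, by linear_combination hp⟩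
  · right; left
    change l 0 * 1 + l 1 * 0 + l 2 * -(ε ^ j.val) = 0 at hp
    exact ⟨rfl, by linear_combination hp⟩
  · right; right
    change l 0 * -(ε ^ j.val) + l 1 * 1 + l 2 * 0 = 0 at hp
    exact ⟨rfl, by linear_combination hp⟩

theorem aux_inv (ε x y : ℂ) (h3 : ε ^ 3 = 1) (m : ℕ) (h : x = y * ε ^ m) :
    y = x * ε ^ (2 * m) := by
  have : (ε ^ m) ^ 3 = 1 := by rw [← pow_mul, mul_comm, pow_mul, h3, one_pow]
  rw [h, mul_comm 2 m, pow_mul]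
  linear_combination (-y) * this

/-- Every line of `ℙ²(ℂ)` through two distinct flexes of the Hesse configuration is one of
the twelve lines: a nonzero linear form vanishing at `t_{i,j}` and `t_{k,m}` with
`(i,j) ≠ (k,m)` is a nonzero multiple of one of the twelve listed forms. -/
theorem line_through_two_flexes (ε : ℂ) (hε : IsPrimitiveRoot ε 3) (l : Fin 3 → ℂ)
    (hl : l ≠ 0) (p q : ZMod 3 × ZMod 3) (hpq : p ≠ q)
    (hp : ∑ i : Fin 3, l i * tpt ε p i = 0) (hq : ∑ i : Fin 3, l i * tpt ε q i = 0) :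
    ∃ (c : ℂ) (k : Fin 12), c ≠ 0 ∧ l = c • lform ε k := by
  have h3 := hε.pow_eq_one
  have same : p.1 = q.1 → ∀ x y : ℂ, x = y * ε ^ p.2.val → x = y * ε ^ q.2.val →
      x = 0 ∧ y = 0 := by
    intro h1 x y hx hy
    have hne : ε ^ p.2.val ≠ ε ^ q.2.val := by
      intro he
      exact hpq (Prod.ext h1 (ZMod.val_injective 3
        (hε.pow_inj (ZMod.val_lt _) (ZMod.val_lt _) he)))
    have hy0 : y = 0 := by
      have : y * (ε ^ p.2.val - ε ^ q.2.val) = 0 := by linear_combination hy - hx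
      exact (mul_eq_zero.mp this).resolve_right (sub_ne_zero.mpr hne)
    exact ⟨by rw [hx, hy0, zero_mul], hy0⟩
  have c01 : ∀ j m : ℕ, l 2 = l 1 * ε ^ j → l 0 = l 2 * ε ^ m →
      ∃ (c : ℂ) (k : Fin 12), c ≠ 0 ∧ l = c • lform ε k := by
    intro j m h h'
    have a := aux_inv ε _ _ h3 _ h
    have b := aux_inv ε _ _ h3 _ h'
    refine aux_mul ε h3 l hl (2 * m + 2 * j) (2 * m) ?_ b
    rw [pow_add, ← mul_assoc, ← b]
    exact a
  have c02 : ∀ j m : ℕ, l 2 = l 1 * ε ^ j → l 1 = l 0 * ε ^ m →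
      ∃ (c : ℂ) (k : Fin 12), c ≠ 0 ∧ l = c • lform ε k := by
    intro j m h h'
    refine aux_mul ε h3 l hl m (m + j) h' ?_
    rw [pow_add, ← mul_assoc, ← h']
    exact h
  have c12 : ∀ j m : ℕ, l 0 = l 2 * ε ^ j → l 1 = l 0 * ε ^ m →
      ∃ (c : ℂ) (k : Fin 12), c ≠ 0 ∧ l = c • lform ε k := by
    intro j m h h'
    exact aux_mul ε h3 l hl m (2 * j) h' (aux_inv ε _ _ h3 _ h)
  rcases tpt_cases ε l p hp with ⟨hp1, h⟩ | ⟨hp1, h⟩ | ⟨hp1, h⟩ <;>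
    rcases tpt_cases ε l q hq with ⟨hq1, h'⟩ | ⟨hq1, h'⟩ | ⟨hq1, h'⟩
  · obtain ⟨a, b⟩ := same (hp1.trans hq1.symm) _ _ h h'
    refine aux_single ε l hl 0 fun j hj => ?_
    fin_cases j <;> first | exact absurd rfl hj | exact a | exact b
  · exact c01 _ _ h h'
  · exact c02 _ _ h h'
  · exact c01 _ _ h' h
  · obtain ⟨a, b⟩ := same (hp1.trans hq1.symm) _ _ h h'
    refine aux_single ε l hl 1 fun j hj => ?_
    fin_cases j <;> first | exact absurd rfl hj | exact a | exact b
  · exact c12 _ _ h h'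
  · exact c02 _ _ h' h
  · exact c12 _ _ h' h
  · obtain ⟨a, b⟩ := same (hp1.trans hq1.symm) _ _ h h'
    refine aux_single ε l hl 2 fun j hj => ?_
    fin_cases j <;> first | exact absurd rfl hj | exact a | exact b
end

section
/- Let (i₁,j₁), (i₂,j₂), (i₃,j₃) ∈ 𝔽₃ × 𝔽₃ be pairwise distinct. Then the three vectors t_{i₁,j₁}, t_{i₂,j₂}, t_{i₃,j₃} are linearly dependent over ℂ (equivalently, the corresponding points of ℙ²(ℂ) are collinear) if and only if (i₁,j₁) + (i₂,j₂) + (i₃,j₃) = (0,0) in 𝔽₃ × 𝔽₃ (equivalently, the three index pairs are collinear in the affine plane 𝔽₃²). -/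
open MvPolynomial

lemma aux_inj (ε : ℂ) (hε : IsPrimitiveRoot ε 3) (j k : ZMod 3) :
    ε ^ j.val = ε ^ k.val ↔ j = k :=
  ⟨fun h => ZMod.val_injective 3 (hε.pow_inj (ZMod.val_lt j) (ZMod.val_lt k) h),
    fun h => by rw [h]⟩

lemma aux_prod (ε : ℂ) (hε : IsPrimitiveRoot ε 3) (j k l : ZMod 3) :
    ε ^ j.val * ε ^ k.val * ε ^ l.val = 1 ↔ j + k + l = 0 := by
  rw [← pow_add, ← pow_add, hε.pow_eq_one_iff_dvd, ← ZMod.natCast_eq_zero_iff]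
  simp

lemma aux_ind (u v w : Fin 3 → ℂ) :
    ¬ LinearIndependent ℂ ![u, v, w] ↔ Matrix.det (Matrix.of ![u, v, w]) = 0 := by
  have h := Matrix.linearIndependent_rows_iff_isUnit (A := Matrix.of ![u, v, w])
  rw [Matrix.isUnit_iff_isUnit_det, isUnit_iff_ne_zero] at h
  rw [← not_iff_not, not_not]
  exact h

lemma tpt_zero (ε : ℂ) (j : ZMod 3) : tpt ε (0, j) = ![0, -(ε ^ j.val), 1] := rfl
lemma tpt_one (ε : ℂ) (j : ZMod 3) : tpt ε (1, j) = ![1, 0, -(ε ^ j.val)] := rfl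
lemma tpt_two (ε : ℂ) (j : ZMod 3) : tpt ε (2, j) = ![-(ε ^ j.val), 1, 0] := rfl

lemma zmod_cases : ∀ i : ZMod 3, i = 0 ∨ i = 1 ∨ i = 2 := by decide

lemma zmod_sum : ∀ a b c : ZMod 3, a ≠ b → a ≠ c → b ≠ c → a + b + c = 0 := by decide

/-- Three distinct flexes of the Hesse configuration are collinear in `ℙ²(ℂ)` (i.e. the
vectors `t_{i₁,j₁}, t_{i₂,j₂}, t_{i₃,j₃}` are linearly dependent) iff the sum of their
index pairs is zero in `𝔽₃ × 𝔽₃` (i.e. the indices are collinear in the affine plane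
`𝔽₃²`). -/
theorem flexes_collinear_iff_indices_sum_zero (ε : ℂ) (hε : IsPrimitiveRoot ε 3)
    (p₁ p₂ p₃ : ZMod 3 × ZMod 3) (h12 : p₁ ≠ p₂) (h13 : p₁ ≠ p₃) (h23 : p₂ ≠ p₃) :
    ¬ LinearIndependent ℂ ![tpt ε p₁, tpt ε p₂, tpt ε p₃] ↔ p₁ + p₂ + p₃ = 0 := by
  obtain ⟨i₁, j₁⟩ := p₁
  obtain ⟨i₂, j₂⟩ := p₂
  obtain ⟨i₃, j₃⟩ := p₃
  have e12 := aux_inj ε hε j₁ j₂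
  have e13 := aux_inj ε hε j₁ j₃
  have e23 := aux_inj ε hε j₂ j₃
  have n1 : ε ^ j₁.val ≠ 0 := pow_ne_zero _ (hε.ne_zero (by norm_num))
  have n2 : ε ^ j₂.val ≠ 0 := pow_ne_zero _ (hε.ne_zero (by norm_num))
  have n3 : ε ^ j₃.val ≠ 0 := pow_ne_zero _ (hε.ne_zero (by norm_num))
  have ep := aux_prod ε hε j₁ j₂ j₃
  have es := zmod_sum j₁ j₂ j₃
  simp only [ne_eq] at es
  rw [aux_ind, Matrix.det_fin_three]
  simp only [Prod.mk_add_mk, Prod.mk_eq_zero]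
  rcases zmod_cases i₁ with rfl | rfl | rfl <;> rcases zmod_cases i₂ with rfl | rfl | rfl <;>
    rcases zmod_cases i₃ with rfl | rfl | rfl <;>
    simp +decide only [tpt_zero, tpt_one, tpt_two, ne_eq, Prod.mk.injEq, true_and, false_and,
      iff_false, Matrix.of_apply, Matrix.cons_val] at h12 h13 h23 ⊢ <;>
    clear hε <;>
    generalize (j₁ + j₂ + j₃ = 0) = S at * <;>
    generalize (j₁ = j₂) = P at * <;>
    generalize (j₁ = j₃) = Q at * <;>
    generalize (j₂ = j₃) = R at * <;>
    generalize ε ^ j₁.val = a at * <;>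
    generalize ε ^ j₂.val = b at * <;>
    generalize ε ^ j₃.val = c at * <;>
    grind
end

section
/- For g ∈ GL₃(ℂ), the following are equivalent: (i) g permutes the nine points projectively, i.e., for every (i,j) ∈ 𝔽₃ × 𝔽₃ there exist (k,m) ∈ 𝔽₃ × 𝔽₃ and c ∈ ℂ* with g·t_{i,j} = c·t_{k,m}; (ii) g permutes the twelve lines projectively, i.e., for each of the twelve listed linear forms l, the composite linear form l∘g (given by v ↦ l(g·v)) is a nonzero scalar multiple of one of the twelve forms. (This is the equality N_{PGL₃}(𝓕) = N_{PGL₃}(𝓛) of normalizers: the Hessian group preserves the twelve-line configuration.) -/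
open MvPolynomial

namespace Hesse

def e1 : Fin 12 → ZMod 3 := ![0, 0, 0, 0, 1, 2, 0, 1, 2, 0, 1, 2]
def e2 : Fin 12 → ZMod 3 := ![0, 0, 0, 0, 2, 1, 1, 0, 2, 2, 1, 0]

/-- Combinatorial incidence of line `k` and point `(i,j)`. -/
def inc (k : Fin 12) (p : ZMod 3 × ZMod 3) : Bool :=
  if k.val < 3 then p.1.val == k.val
  else if p.1 = 0 then p.2 == e2 k - e1 k
  else if p.1 = 1 then p.2 == - e2 k
  else p.2 == e1 k

lemma inc_lines : ∀ k m : Fin 12, k.val / 3 ≠ m.val / 3 → ∃ p, inc k p = true ∧ inc m p = true := by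
  decide +kernel

lemma inc_points : ∀ p q : ZMod 3 × ZMod 3, p ≠ q → ∃ k, inc k p = true ∧ inc k q = true := by
  decide +kernel

lemma inc_two : ∀ k : Fin 12, ∃ p q : ZMod 3 × ZMod 3, p ≠ q ∧ inc k p = true ∧ inc k q = true := by
  decide +kernel

lemma inc_card : ∀ p : ZMod 3 × ZMod 3, (Finset.univ.filter fun k => inc k p = true).card = 4 := by
  decide +kernel

lemma tri_card : ∀ m : Fin 12,
    (Finset.univ.filter fun k : Fin 12 => k.val / 3 = m.val / 3).card = 3 := by
  decide +kernel

lemma ext_line : ∀ k m : Fin 12, (∀ p, inc k p = inc m p) → k = m := by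
  decide +kernel

lemma ext_point : ∀ p q : ZMod 3 × ZMod 3, (∀ k, inc k p = inc k q) → p = q := by
  decide +kernel

open Matrix

lemma inc_iff (ε : ℂ) (hε : IsPrimitiveRoot ε 3) (k : Fin 12) (p : ZMod 3 × ZMod 3) :
    inc k p = true ↔ lform ε k ⬝ᵥ tpt ε p = 0 := by
  have h1 : ε ≠ 1 := hε.ne_one (by norm_num)
  have h0 : ε ≠ 0 := hε.ne_zero (by norm_num)
  have h3 : ε ^ 3 = 1 := hε.pow_eq_one
  have hs : ε ^ 2 = -1 - ε := by
    have : (ε - 1) * (ε ^ 2 + ε + 1) = 0 := by linear_combination h3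
    rcases mul_eq_zero.1 this with h | h
    · exact absurd (sub_eq_zero.1 h) h1
    · linear_combination h
  clear hε
  obtain ⟨i, j⟩ := p
  change Fin 3 at i j
  have v0 : ZMod.val (n := 3) (0 : Fin 3) = 0 := rfl
  have v1 : ZMod.val (n := 3) (1 : Fin 3) = 1 := rfl
  have v2 : ZMod.val (n := 3) (2 : Fin 3) = 2 := rfl
  fin_cases k <;> fin_cases i <;> fin_cases j <;>
  first
  | (refine iff_of_true (by decide) ?_
     simp [lform, tpt, dotProduct, Fin.sum_univ_three, ZMod.val]
     try grind)
  | (refine iff_of_false (by decide) ?_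
     simp [lform, tpt, dotProduct, Fin.sum_univ_three, ZMod.val]
     try grind)

lemma tpt_ne (ε : ℂ) (p : ZMod 3 × ZMod 3) : tpt ε p ≠ 0 := by
  obtain ⟨i, j⟩ := p
  change Fin 3 at i
  intro h
  have h0 := congrFun h 0
  have h1 := congrFun h 1
  have h2 := congrFun h 2
  fin_cases i <;> simp [tpt, ZMod.val] at h0 h1 h2

lemma lform_ne (ε : ℂ) (k : Fin 12) : lform ε k ≠ 0 := by
  intro h
  have h0 := congrFun h 0
  have h1 := congrFun h 1
  have h2 := congrFun h 2
  fin_cases k <;> simp [lform] at h0 h1 h2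

lemma par (x y : Fin 3 → ℂ) (hy : y ≠ 0) (h : crossProduct x y = 0) : ∃ c : ℂ, x = c • y := by
  have h0 := congrFun h 0
  have h1 := congrFun h 1
  have h2 := congrFun h 2
  simp [cross_apply] at h0 h1 h2
  have : ∃ i, y i ≠ 0 := by
    by_contra hc
    push Not at hc
    exact hy (funext hc)
  obtain ⟨i, hi⟩ := this
  refine ⟨x i / y i, ?_⟩
  ext j
  simp only [Pi.smul_apply, smul_eq_mul]
  rw [div_mul_eq_mul_div, eq_div_iff hi]
  fin_cases i <;> fin_cases j <;> simp <;>
    first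
    | done
    | linear_combination h0
    | linear_combination h1
    | linear_combination h2
    | linear_combination -h0
    | linear_combination -h1
    | linear_combination -h2

lemma key (u v f l : Fin 3 → ℂ) (hv : v ≠ 0) (huv : ∀ c : ℂ, u ≠ c • v) (hf : f ≠ 0) (hl : l ≠ 0)
    (fu : f ⬝ᵥ u = 0) (fv : f ⬝ᵥ v = 0) (lu : l ⬝ᵥ u = 0) (lv : l ⬝ᵥ v = 0) :
    ∃ c : ℂ, c ≠ 0 ∧ f = c • l := by
  have hw : crossProduct u v ≠ 0 := fun h => by
    obtain ⟨c, hc⟩ := par u v hv h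
    exact huv c hc
  have aux : ∀ f : Fin 3 → ℂ, f ⬝ᵥ u = 0 → f ⬝ᵥ v = 0 →
      crossProduct f (crossProduct u v) = 0 := by
    intro f fu fv
    simp [dotProduct, Fin.sum_univ_three] at fu fv
    ext i
    fin_cases i <;> simp [cross_apply]
    · linear_combination u 0 * fv - v 0 * fu
    · linear_combination u 1 * fv - v 1 * fu
    · linear_combination u 2 * fv - v 2 * fu
  obtain ⟨c, hc⟩ := par _ _ hw (aux f fu fv)
  obtain ⟨d, hd⟩ := par _ _ hw (aux l lu lv)
  have c0 : c ≠ 0 := by rintro rfl; simp at hc; exact hf hc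
  have d0 : d ≠ 0 := by rintro rfl; simp at hd; exact hl hd
  refine ⟨c / d, div_ne_zero c0 d0, ?_⟩
  rw [hd, smul_smul, div_mul_cancel₀ _ d0, hc]

lemma tpt_par (ε : ℂ) (hε : IsPrimitiveRoot ε 3) (p q) (c : ℂ) (h : tpt ε p = c • tpt ε q) :
    p = q := by
  have c0 : c ≠ 0 := by rintro rfl; simp at h; exact tpt_ne ε p h
  apply ext_point
  intro k
  rw [Bool.eq_iff_iff, inc_iff ε hε, inc_iff ε hε, h]
  simp [c0]

lemma lform_par (ε : ℂ) (hε : IsPrimitiveRoot ε 3) (k m) (c : ℂ) (h : lform ε k = c • lform ε m) :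
    k = m := by
  have c0 : c ≠ 0 := by rintro rfl; simp at h; exact lform_ne ε k h
  apply ext_line
  intro p
  rw [Bool.eq_iff_iff, inc_iff ε hε, inc_iff ε hε, h]
  simp [c0]

end Hesse

open Hesse Matrix in
theorem permutes_flexes_iff_permutes_lines (ε : ℂ) (hε : IsPrimitiveRoot ε 3)
    (g : Matrix.GeneralLinearGroup (Fin 3) ℂ) :
    (∀ ij : ZMod 3 × ZMod 3, ∃ (km : ZMod 3 × ZMod 3) (c : ℂ), c ≠ 0 ∧
        Matrix.mulVec (g : Matrix (Fin 3) (Fin 3) ℂ) (tpt ε ij) = c • tpt ε km) ↔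
      ∀ k : Fin 12, ∃ (m : Fin 12) (c : ℂ), c ≠ 0 ∧
        Matrix.vecMul (lform ε k) (g : Matrix (Fin 3) (Fin 3) ℂ) = c • lform ε m := by
  have injm : Function.Injective (fun v => (g : Matrix (Fin 3) (Fin 3) ℂ) *ᵥ v) :=
    Matrix.mulVec_injective_of_isUnit g.isUnit
  have injv : Function.Injective (fun v => v ᵥ* (g : Matrix (Fin 3) (Fin 3) ℂ)) :=
    Matrix.vecMul_injective_of_isUnit g.isUnit
  constructor
  · intro H
    choose σ c c0 hσ using H
    have σi : Function.Injective σ := by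
      intro p q h
      apply tpt_par ε hε p q (c p / c q)
      apply injm
      simp only [Matrix.mulVec_smul, hσ, h, smul_smul, div_mul_cancel₀ _ (c0 q)]
    have σs := Finite.surjective_of_injective σi
    intro k
    obtain ⟨p, q, hpq, hp, hq⟩ := inc_two k
    obtain ⟨p, rfl⟩ := σs p
    obtain ⟨q, rfl⟩ := σs q
    have hpq' : p ≠ q := fun h => hpq (by rw [h])
    obtain ⟨m, mp, mq⟩ := inc_points p q hpq'
    rw [inc_iff ε hε] at hp hq mp mq
    refine ⟨m, ?_⟩
    refine key (tpt ε p) (tpt ε q) _ _ (tpt_ne ε q) (fun c h => hpq' (tpt_par ε hε p q c h)) ?_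
      (lform_ne ε m) ?_ ?_ mp mq
    · intro h
      exact lform_ne ε k (injv (by simpa using h))
    · rw [← Matrix.dotProduct_mulVec, hσ, dotProduct_smul, hp, smul_zero]
    · rw [← Matrix.dotProduct_mulVec, hσ, dotProduct_smul, hq, smul_zero]
  · intro H
    choose τ c c0 hτ using H
    have τi : Function.Injective τ := by
      intro p q h
      apply lform_par ε hε p q (c p / c q)
      apply injv
      simp only [Matrix.smul_vecMul, hτ, h, smul_smul, div_mul_cancel₀ _ (c0 q)]
    have τb := Finite.injective_iff_bijective.1 τi
    intro p
    have hS : (Finset.univ.filter fun k => inc (τ k) p = true).card = 4 := by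
      rw [← inc_card p]
      refine Finset.card_bijective τ τb ?_
      intro i
      simp
    obtain ⟨k, hk⟩ : (Finset.univ.filter fun k => inc (τ k) p = true).Nonempty := by
      rw [← Finset.card_pos, hS]; norm_num
    obtain ⟨m, hm, hkm⟩ : ∃ m, inc (τ m) p = true ∧ m.val / 3 ≠ k.val / 3 := by
      by_contra hc
      push Not at hc
      have := Finset.card_le_card (s := Finset.univ.filter fun k => inc (τ k) p = true)
        (t := Finset.univ.filter fun m : Fin 12 => m.val / 3 = k.val / 3) (by
          intro m hm
          simp only [Finset.mem_filter, Finset.mem_univ, true_and] at hm ⊢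
          exact hc m hm)
      rw [hS, tri_card] at this
      omega
    simp only [Finset.mem_filter, Finset.mem_univ, true_and] at hk
    obtain ⟨q, mq, kq⟩ := inc_lines m k hkm
    rw [inc_iff ε hε] at hk hm mq kq
    refine ⟨q, ?_⟩
    refine key (lform ε m) (lform ε k) _ _ (lform_ne ε k)
      (fun c h => hkm (by rw [lform_par ε hε m k c h])) ?_
      (tpt_ne ε q) ?_ ?_ (by rw [dotProduct_comm, mq]) (by rw [dotProduct_comm, kq])
    · intro h
      exact tpt_ne ε p (injm (by simpa using h))
    · rw [dotProduct_comm, Matrix.dotProduct_mulVec, hτ, smul_dotProduct, hm, smul_zero]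
    · rw [dotProduct_comm, Matrix.dotProduct_mulVec, hτ, smul_dotProduct, hk, smul_zero]
end
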